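/- arXiv:2502.10478 — 3 statements merged into one kernel-verified Lean document; each statement's English description precedes it below -/
import Mathlib

section
/- (Prevention of mode collapse.) For every λ > 0 and every N×N cost matrix C, the minimizer γ* of the entropy-regularized objective ⟨γ, C⟩ − λ H(γ) over the set Π of couplings has strictly positive entries: γ*_{ij} > 0 for all i, j. -/
/-!
The entropy has infinite slope at a vanishing entry. If `γ` is a coupling with `γ i₀ j₀ = 0`, move
from `γ` towards the uniform coupling `u = 1 / N ^ 2` along `γₜ = (1 - t) γ + t u`. Convexity of
`x ↦ x log x` bounds every entry of the objective by its chord, and at `(i₀, j₀)`, where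
`(t u) log (t u) = t (u log u) + t u log t` exactly, there is an additional gain `t u log t`. Hence
`obj γₜ ≤ (1 - t) obj γ + t obj u + λ t u log t`, so minimality of `γ` would give
`obj γ - obj u ≤ λ u log t` for all `t ∈ (0, 1)`, which is absurd as `t → 0`.
-/

open scoped BigOperators

/-- The chord inequality for `x ↦ x log x` between `x ≥ 0` and `u > 0`. -/
lemma mul_log_chord {x u t : ℝ} (hx : 0 ≤ x) (hu : 0 < u) (h0 : 0 < t) (h1 : t < 1) :
    ((1 - t) * x + t * u) * Real.log ((1 - t) * x + t * u)
      ≤ (1 - t) * (x * Real.log x) + t * (u * Real.log u) := by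
  have h := Real.convexOn_mul_log.2 (Set.mem_Ici.2 hx) (Set.mem_Ici.2 hu.le)
    (sub_nonneg.2 h1.le) h0.le (by ring)
  simpa only [smul_eq_mul] using h

/-- The bound on the entropy term of `(1 - t) γ + t u` when `γ i₀ j₀ = 0`: the chord bound improves
by `t u log t`. -/
lemma sum_mul_log_mix_le {N : ℕ} {g : Fin N → Fin N → ℝ} (hg : ∀ i j, 0 ≤ g i j)
    {u t : ℝ} (hu : 0 < u) (h0 : 0 < t) (h1 : t < 1) {i₀ j₀ : Fin N} (hz : g i₀ j₀ = 0) :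
    ∑ i, ∑ j, ((1 - t) * g i j + t * u) * Real.log ((1 - t) * g i j + t * u)
      ≤ (1 - t) * (∑ i, ∑ j, g i j * Real.log (g i j))
        + t * (∑ _i : Fin N, ∑ _j : Fin N, u * Real.log u) + t * u * Real.log t := by
  have key : ∀ i j, ((1 - t) * g i j + t * u) * Real.log ((1 - t) * g i j + t * u)
      ≤ (1 - t) * (g i j * Real.log (g i j)) + t * (u * Real.log u)
        + (if i = i₀ then (if j = j₀ then t * u * Real.log t else 0) else 0) := by
    intro i j
    have hc := mul_log_chord (hg i j) hu h0 h1
    split_ifs with hi hj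
    · subst hi hj
      rw [hz, mul_zero, zero_add, Real.log_mul h0.ne' hu.ne']
      apply le_of_eq
      ring
    · linarith
    · linarith
  refine (Finset.sum_le_sum fun i _ => Finset.sum_le_sum fun j _ => key i j).trans (le_of_eq ?_)
  have hs : ∑ i : Fin N, ∑ j : Fin N,
      (if i = i₀ then (if j = j₀ then t * u * Real.log t else 0) else 0)
        = t * u * Real.log t := by
    rw [Finset.sum_eq_single i₀ (fun i _ hi => by simp [hi]) (by simp)]
    simp
  simp only [Finset.sum_add_distrib, hs, ← Finset.mul_sum]

/-- Prevention of mode collapse: for `λ > 0`, any minimizer of the entropy-regularized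
objective `⟨γ, C⟩ − λ H(γ)` over the set of couplings has strictly positive entries. -/
theorem entropic_OT_minimizer_pos (N : ℕ) (hN : 1 ≤ N)
    (lam : ℝ) (hlam : 0 < lam) (C : Fin N → Fin N → ℝ) :
    let Couplings : Set (Fin N → Fin N → ℝ) :=
      {γ | (∀ i j, 0 ≤ γ i j) ∧ (∀ i, ∑ j, γ i j = 1 / N) ∧ (∀ j, ∑ i, γ i j = 1 / N)}
    let obj : (Fin N → Fin N → ℝ) → ℝ := fun γ =>
      (∑ i, ∑ j, γ i j * C i j) - lam * (-∑ i, ∑ j, γ i j * Real.log (γ i j))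
    ∀ γs ∈ Couplings, (∀ γ ∈ Couplings, obj γs ≤ obj γ) → ∀ i j, 0 < γs i j := by
  intro Couplings obj g hg hmin i₀ j₀
  obtain ⟨hpos, hrow, hcol⟩ := hg
  by_contra hneg
  have hz : g i₀ j₀ = 0 := le_antisymm (not_lt.1 hneg) (hpos i₀ j₀)
  have hNpos : (0 : ℝ) < N := by exact_mod_cast hN
  obtain ⟨u, hu⟩ : ∃ u : ℝ, u = 1 / N / N := ⟨_, rfl⟩
  have hu0 : 0 < u := by rw [hu]; positivity
  have hNu : (N : ℝ) * u = 1 / N := by rw [hu]; field_simp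
  -- `t` is chosen so small that `λ u log t = -(|obj u - obj g| + 1)`.
  obtain ⟨D, hD⟩ : ∃ D : ℝ, D = obj (fun _ _ => u) - obj g := ⟨_, rfl⟩
  obtain ⟨t, ht⟩ : ∃ t : ℝ, t = Real.exp (-((|D| + 1) / (lam * u))) := ⟨_, rfl⟩
  have ht0 : 0 < t := ht ▸ Real.exp_pos _
  have ht1 : t < 1 := by
    rw [ht, Real.exp_lt_one_iff, neg_lt_zero]
    positivity
  have hlog : lam * u * Real.log t = -(|D| + 1) := by
    rw [ht, Real.log_exp]
    field_simp
  have hmem : (fun i j => (1 - t) * g i j + t * u) ∈ Couplings := by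
    refine ⟨fun i j => ?_, fun i => ?_, fun j => ?_⟩
    · have := mul_nonneg (sub_nonneg.2 ht1.le) (hpos i j)
      positivity
    · simp only [Finset.sum_add_distrib, ← Finset.mul_sum, hrow, Finset.sum_const,
        Finset.card_univ, Fintype.card_fin, nsmul_eq_mul]
      linear_combination t * hNu
    · simp only [Finset.sum_add_distrib, ← Finset.mul_sum, hcol, Finset.sum_const,
        Finset.card_univ, Fintype.card_fin, nsmul_eq_mul]
      linear_combination t * hNu
  have hle := hmin _ hmem
  have hent := mul_le_mul_of_nonneg_left (sum_mul_log_mix_le hpos hu0 ht0 ht1 hz) hlam.le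
  have hcost : ∑ i, ∑ j, ((1 - t) * g i j + t * u) * C i j
      = (1 - t) * (∑ i, ∑ j, g i j * C i j) + t * (∑ i, ∑ j, u * C i j) := by
    simp only [Finset.mul_sum, ← Finset.sum_add_distrib]
    exact Finset.sum_congr rfl fun i _ => Finset.sum_congr rfl fun j _ => by ring
  have hfin : 0 ≤ t * (D + lam * u * Real.log t) := by
    simp only [obj] at hle hD
    rw [hcost] at hle
    rw [hD]
    linarith
  rw [hlog] at hfin
  have := nonneg_of_mul_nonneg_right hfin ht0
  linarith [le_abs_self D]
end

section
/- For every N×N cost matrix C and every λ ≥ 0, the entropy-regularized value W_λ = inf_{γ ∈ Π} (⟨γ, C⟩ − λ H(γ)) satisfies the two-sided bound W_0 − 2λ log N ≤ W_λ ≤ W_0, where W_0 = inf_{γ ∈ Π} ⟨γ, C⟩ is the unregularized optimal transport value; consequently W_λ → W_0 as λ → 0⁺. -/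
open scoped BigOperators

/-!
The entropy of a coupling satisfies `0 ≤ H(γ) ≤ 2 log N`: the lower bound holds because the entries
of `γ` lie in `[0, 1]`, the upper bound because `γ` is a probability vector on `N ^ 2` points
(`coupling_entropy_nonneg`, `coupling_entropy_le`). Hence for `λ ≥ 0` the regularized objective lies
between `⟨γ, C⟩ - 2 λ log N` and `⟨γ, C⟩` for every coupling `γ`, and taking infima over the nonempty
set of couplings gives the two-sided bound; the transport cost is bounded below
(`coupling_cost_ge`), so these infima are genuine. The limit follows by squeezing.
-/

/-- The couplings of the uniform distribution on `N` points with itself. -/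
def IsUniformCoupling (N : ℕ) (γ : Fin N → Fin N → ℝ) : Prop :=
  (∀ i j, 0 ≤ γ i j) ∧ (∀ i, ∑ j, γ i j = 1 / N) ∧ (∀ j, ∑ i, γ i j = 1 / N)

lemma IsUniformCoupling.le_one {N : ℕ} (hN : 1 ≤ N) {γ : Fin N → Fin N → ℝ}
    (h : IsUniformCoupling N γ) (i j : Fin N) : γ i j ≤ 1 := by
  have h1 : γ i j ≤ ∑ j, γ i j :=
    Finset.single_le_sum (f := fun j => γ i j) (fun j _ => h.1 i j) (Finset.mem_univ j)
  have hN' : (1 : ℝ) ≤ N := by exact_mod_cast hN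
  have h2 : (1 : ℝ) / N ≤ 1 := by
    rw [div_le_one (by linarith)]
    exact hN'
  linarith [h.2.1 i]

lemma IsUniformCoupling.sum_eq_one {N : ℕ} (hN : 1 ≤ N) {γ : Fin N → Fin N → ℝ}
    (h : IsUniformCoupling N γ) : ∑ i, ∑ j, γ i j = 1 := by
  have hN' : (N : ℝ) ≠ 0 := by positivity
  simp [h.2.1, hN']

/-- The product coupling, with all entries `1 / N ^ 2`. -/
lemma isUniformCoupling_const {N : ℕ} (hN : 1 ≤ N) :
    IsUniformCoupling N (fun _ _ => 1 / (N : ℝ) ^ 2) := by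
  have hN' : (N : ℝ) ≠ 0 := by positivity
  refine ⟨fun _ _ => by positivity, fun _ => ?_, fun _ => ?_⟩ <;>
  · simp only [Finset.sum_const, Finset.card_univ, Fintype.card_fin, nsmul_eq_mul]
    field_simp

lemma coupling_entropy_nonneg {N : ℕ} (hN : 1 ≤ N) {γ : Fin N → Fin N → ℝ}
    (h : IsUniformCoupling N γ) : 0 ≤ -∑ i, ∑ j, γ i j * Real.log (γ i j) := by
  rw [neg_nonneg]
  exact Finset.sum_nonpos fun i _ => Finset.sum_nonpos fun j _ =>
    mul_nonpos_of_nonneg_of_nonpos (h.1 i j) (Real.log_nonpos (h.1 i j) (h.le_one hN i j))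

/-- Nonnegativity of the relative entropy of `γ` with respect to the product coupling, obtained by
summing `log t ≤ t - 1` at `t = 1 / (N ^ 2 * γ i j)`. -/
lemma coupling_entropy_le {N : ℕ} (hN : 1 ≤ N) {γ : Fin N → Fin N → ℝ}
    (h : IsUniformCoupling N γ) :
    -∑ i, ∑ j, γ i j * Real.log (γ i j) ≤ 2 * Real.log N := by
  have hN' : (0 : ℝ) < N := by positivity
  have key : ∀ i j, -(γ i j * Real.log (γ i j)) ≤
      γ i j * (2 * Real.log N) + (1 / (N : ℝ) ^ 2 - γ i j) := by
    intro i j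
    rcases (h.1 i j).eq_or_lt with h0 | h0
    · rw [← h0]
      simp
    · have h1 := Real.log_le_sub_one_of_pos (x := 1 / ((N : ℝ) ^ 2 * γ i j)) (by positivity)
      rw [one_div, Real.log_inv, Real.log_mul (by positivity) h0.ne', Real.log_pow] at h1
      have h2 := mul_le_mul_of_nonneg_left h1 h0.le
      have h3 : γ i j * (((N : ℝ) ^ 2 * γ i j)⁻¹ - 1) = 1 / (N : ℝ) ^ 2 - γ i j := by
        field_simp
      rw [h3] at h2
      push_cast at h2
      linarith
  have hs := Finset.sum_le_sum fun i (_ : i ∈ Finset.univ) =>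
    Finset.sum_le_sum fun j (_ : j ∈ Finset.univ) => key i j
  simp only [Finset.sum_add_distrib, Finset.sum_sub_distrib, ← Finset.sum_mul,
    Finset.sum_neg_distrib] at hs
  have hc : ∑ _i : Fin N, ∑ _j : Fin N, 1 / (N : ℝ) ^ 2 = 1 := by
    exact (isUniformCoupling_const hN).sum_eq_one hN
  rw [h.sum_eq_one hN, hc] at hs
  linarith

lemma coupling_cost_ge {N : ℕ} (hN : 1 ≤ N) (C : Fin N → Fin N → ℝ) {γ : Fin N → Fin N → ℝ}
    (h : IsUniformCoupling N γ) : -∑ i, ∑ j, |C i j| ≤ ∑ i, ∑ j, γ i j * C i j := by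
  simp only [← Finset.sum_neg_distrib]
  refine Finset.sum_le_sum fun i _ => Finset.sum_le_sum fun j _ => ?_
  nlinarith [h.1 i j, h.le_one hN i j, neg_abs_le (C i j), abs_nonneg (C i j)]

/-- Two-sided bound `W₀ − 2λ log N ≤ W_λ ≤ W₀` for the entropy-regularized value, for every
`λ ≥ 0`; consequently `W_λ → W₀` as `λ → 0⁺`. -/
theorem entropic_value_two_sided_bound (N : ℕ) (hN : 1 ≤ N) (C : Fin N → Fin N → ℝ) :
    let W : ℝ → ℝ := fun lam => sInf {v : ℝ | ∃ γ : Fin N → Fin N → ℝ,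
        ((∀ i j, 0 ≤ γ i j) ∧ (∀ i, ∑ j, γ i j = 1 / N) ∧ (∀ j, ∑ i, γ i j = 1 / N)) ∧
        v = (∑ i, ∑ j, γ i j * C i j) - lam * (-∑ i, ∑ j, γ i j * Real.log (γ i j))}
    (∀ lam : ℝ, 0 ≤ lam → W 0 - 2 * lam * Real.log N ≤ W lam ∧ W lam ≤ W 0) ∧
      Filter.Tendsto W (nhdsWithin 0 (Set.Ioi 0)) (nhds (W 0)) := by
  intro W
  have hW : ∀ lam : ℝ, 0 ≤ lam → ∀ γ, IsUniformCoupling N γ →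
      W lam ≤ (∑ i, ∑ j, γ i j * C i j) - lam * (-∑ i, ∑ j, γ i j * Real.log (γ i j)) := by
    intro lam hl γ hγ
    refine csInf_le ⟨-∑ i, ∑ j, |C i j| - lam * (2 * Real.log N), ?_⟩ ⟨γ, hγ, rfl⟩
    rintro v ⟨γ', hγ', rfl⟩
    linarith [coupling_cost_ge hN C hγ',
      mul_le_mul_of_nonneg_left (coupling_entropy_le hN hγ') hl]
  have hW' : ∀ lam b : ℝ, (∀ γ, IsUniformCoupling N γ →
      b ≤ (∑ i, ∑ j, γ i j * C i j) - lam * (-∑ i, ∑ j, γ i j * Real.log (γ i j))) →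
      b ≤ W lam := by
    intro lam b hb
    refine le_csInf ⟨_, _, isUniformCoupling_const hN, rfl⟩ ?_
    rintro v ⟨γ, hγ, rfl⟩
    exact hb γ hγ
  have hmain : ∀ lam : ℝ, 0 ≤ lam → W 0 - 2 * lam * Real.log N ≤ W lam ∧ W lam ≤ W 0 := by
    intro lam hl
    refine ⟨hW' _ _ fun γ hγ => ?_, hW' _ _ fun γ hγ => ?_⟩
    · linarith [hW 0 le_rfl γ hγ, mul_le_mul_of_nonneg_left (coupling_entropy_le hN hγ) hl]
    · linarith [hW lam hl γ hγ, mul_nonneg hl (coupling_entropy_nonneg hN hγ)]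
  refine ⟨hmain, ?_⟩
  have hlim : Filter.Tendsto (fun lam : ℝ => W 0 - 2 * lam * Real.log N)
      (nhdsWithin 0 (Set.Ioi 0)) (nhds (W 0)) := by
    have hc : Continuous fun lam : ℝ => W 0 - 2 * lam * Real.log N := by fun_prop
    have := hc.tendsto 0
    simp only [mul_zero, zero_mul, sub_zero] at this
    exact this.mono_left nhdsWithin_le_nhds
  refine tendsto_of_tendsto_of_tendsto_of_le_of_le' hlim tendsto_const_nhds ?_ ?_
  · filter_upwards [self_mem_nhdsWithin] with lam hl using (hmain lam (le_of_lt hl)).1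
  · filter_upwards [self_mem_nhdsWithin] with lam hl using (hmain lam (le_of_lt hl)).2
end

section
/- (Sufficiency of the Gibbs form for Sinkhorn optimality.) Let λ > 0, let C be an N×N cost matrix, and suppose there exist real vectors f, g ∈ ℝ^N such that the matrix γ defined by γ_{ij} = exp((f_i + g_j − C_{ij})/λ) has all row sums equal to 1/N and all column sums equal to 1/N. Then γ is the unique minimizer of the entropy-regularized objective ⟨γ', C⟩ − λ H(γ') over the set Π of couplings. -/
/-!
Since `lam * log (γ i j) = f i + g j - C i j`, the objective at a coupling `p` equals
`(∑ f + ∑ g) / N + lam * KL(p ‖ γ)`, where the first term is the same for all couplings because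
`f i + g j` only sees the marginals. The divergence is `∑ i, ∑ j, γ i j * klFun (p i j / γ i j)`, a
sum of nonnegative terms, so it is nonnegative and vanishes only at `p = γ`
(`InformationTheory.klFun_nonneg`, `InformationTheory.klFun_eq_zero_iff`).
-/

open scoped BigOperators

open InformationTheory in
/-- The term `x * c + lam * x * log x` of the objective, rewritten through the divergence of `x`
from the Gibbs weight `y`. It holds at `x = 0` as well, where `x * log x = 0`. -/
lemma gibbs_pointwise {lam x y c a : ℝ} (hlam : 0 < lam) (hx : 0 ≤ x)
    (hy : y = Real.exp ((a - c) / lam)) :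
    x * c + lam * (x * Real.log x) = x * a + lam * (x - y) + lam * (y * klFun (x / y)) := by
  have hy0 : 0 < y := hy ▸ Real.exp_pos _
  have hlog : lam * Real.log y = a - c := by
    rw [hy, Real.log_exp]; field_simp
  have hkl : y * klFun (x / y) = x * Real.log (x / y) + y - x := by
    rw [klFun_apply]; field_simp
  rw [hkl]
  rcases hx.eq_or_lt with rfl | hx0
  · simp
  · rw [Real.log_div hx0.ne' hy0.ne']
    linear_combination x * hlog

/-- A sum of `p i j * (f i + g j)` depends on `p` only through its marginals. -/
lemma sum_mul_potentials {N : ℕ} {p : Fin N → Fin N → ℝ} {m : ℝ} (f g : Fin N → ℝ)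
    (hrow : ∀ i, ∑ j, p i j = m) (hcol : ∀ j, ∑ i, p i j = m) :
    ∑ i, ∑ j, p i j * (f i + g j) = m * ∑ i, f i + m * ∑ j, g j := by
  simp only [mul_add, Finset.sum_add_distrib]
  congr 1
  · simp only [← Finset.sum_mul, hrow, Finset.mul_sum]
  · rw [Finset.sum_comm]
    simp only [← Finset.sum_mul, hcol, Finset.mul_sum]

/-- Sufficiency of the Gibbs form for Sinkhorn optimality: if
`γ_{ij} = exp((f_i + g_j − C_{ij})/λ)` has uniform marginals `1/N`, then `γ` is a coupling,
it minimizes the entropy-regularized objective over the set of couplings, and every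
minimizer equals `γ`. -/
theorem gibbs_form_is_unique_minimizer (N : ℕ) (hN : 1 ≤ N)
    (lam : ℝ) (hlam : 0 < lam) (C : Fin N → Fin N → ℝ) (f g : Fin N → ℝ)
    (γ : Fin N → Fin N → ℝ)
    (hγ : ∀ i j, γ i j = Real.exp ((f i + g j - C i j) / lam))
    (hrow : ∀ i, ∑ j, γ i j = 1 / N) (hcol : ∀ j, ∑ i, γ i j = 1 / N) :
    let Couplings : Set (Fin N → Fin N → ℝ) :=
      {γ' | (∀ i j, 0 ≤ γ' i j) ∧ (∀ i, ∑ j, γ' i j = 1 / N) ∧ (∀ j, ∑ i, γ' i j = 1 / N)}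
    let obj : (Fin N → Fin N → ℝ) → ℝ := fun γ' =>
      (∑ i, ∑ j, γ' i j * C i j) - lam * (-∑ i, ∑ j, γ' i j * Real.log (γ' i j))
    γ ∈ Couplings ∧ (∀ γ' ∈ Couplings, obj γ ≤ obj γ') ∧
      ∀ γ' ∈ Couplings, (∀ γ'' ∈ Couplings, obj γ' ≤ obj γ'') → γ' = γ := by
  intro Couplings obj
  have hpos : ∀ i j, 0 < γ i j := fun i j => hγ i j ▸ Real.exp_pos _
  have hmem : γ ∈ Couplings := ⟨fun i j => (hpos i j).le, hrow, hcol⟩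
  set K : (Fin N → Fin N → ℝ) → ℝ := fun p =>
    ∑ i, ∑ j, γ i j * InformationTheory.klFun (p i j / γ i j) with hK
  have hobj : ∀ p ∈ Couplings,
      obj p = (1 / N * ∑ i, f i + 1 / N * ∑ j, g j) + lam * K p := by
    rintro p ⟨hp, hprow, hpcol⟩
    have hmass : ∑ i, ∑ j, lam * (p i j - γ i j) = 0 := by
      simp [← Finset.mul_sum, Finset.sum_sub_distrib, hprow, hrow]
    calc obj p = ∑ i, ∑ j, (p i j * C i j + lam * (p i j * Real.log (p i j))) := by
          simp only [obj, Finset.sum_add_distrib, ← Finset.mul_sum]; ring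
      _ = ∑ i, ∑ j, (p i j * (f i + g j) + lam * (p i j - γ i j)
            + lam * (γ i j * InformationTheory.klFun (p i j / γ i j))) :=
          Finset.sum_congr rfl fun i _ => Finset.sum_congr rfl fun j _ =>
            gibbs_pointwise hlam (hp i j) (hγ i j)
      _ = _ := by
          rw [← sum_mul_potentials f g hprow hpcol, hK]
          simp only [Finset.sum_add_distrib, hmass, add_zero]
          simp only [← Finset.mul_sum]
  have hKγ : K γ = 0 := by
    simp [hK, div_self (hpos _ _).ne', InformationTheory.klFun_one]
  have hterm : ∀ p ∈ Couplings, ∀ i j,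
      0 ≤ γ i j * InformationTheory.klFun (p i j / γ i j) := fun p hp i j =>
    mul_nonneg (hpos i j).le
      (InformationTheory.klFun_nonneg (div_nonneg (hp.1 i j) (hpos i j).le))
  have hKnn : ∀ p ∈ Couplings, 0 ≤ K p := fun p hp =>
    Finset.sum_nonneg fun i _ => Finset.sum_nonneg fun j _ => hterm p hp i j
  refine ⟨hmem, fun p hp => ?_, fun p hp hmin => ?_⟩
  · rw [hobj γ hmem, hobj p hp, hKγ]
    have := mul_nonneg hlam.le (hKnn p hp)
    linarith
  · have hle := hmin γ hmem
    rw [hobj γ hmem, hobj p hp, hKγ] at hle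
    have hK0 : K p = 0 := by
      have := hKnn p hp
      nlinarith
    funext i j
    have hi := (Finset.sum_eq_zero_iff_of_nonneg fun i _ =>
      Finset.sum_nonneg fun j _ => hterm p hp i j).1 hK0 i (Finset.mem_univ i)
    have hij := (Finset.sum_eq_zero_iff_of_nonneg fun j _ => hterm p hp i j).1 hi j
      (Finset.mem_univ j)
    have hkl := (mul_eq_zero.1 hij).resolve_left (hpos i j).ne'
    rw [InformationTheory.klFun_eq_zero_iff (div_nonneg (hp.1 i j) (hpos i j).le),
      div_eq_one_iff_eq (hpos i j).ne'] at hkl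
    exact hkl
end
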